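/- arXiv:1506.06688 — 2 statements merged into one kernel-verified Lean document; each statement's English description precedes it below -/
import Mathlib

section
/- For a sequence (b_n)_{n≥1} of positive integers bounded above, let γ_{(b_n)} denote the unique real number γ > 1 with Σ_{n≥1} b_n γ^{−n} = 1. Let (A_n)_{n≥1} be a sequence of nonempty finite sets of positive integers with ℓ_n = min A_n, u_n = max A_n, Δ_n = u_n − ℓ_n, and δ_n = δ(A_n) the largest gap of A_n, and suppose (u_n) is bounded. Then for every real number γ such that γ_{(ℓ_n)} ≤ γ ≤ γ_{(u_n)} and δ_n ≤ Σ_{i=1}^{∞} Δ_{n+i} γ^{−i} for every n, there exists a sequence (a_n) with a_n ∈ A_n for all n such that Σ_{n≥1} a_n γ^{−n} = 1, i.e., γ = γ_{(a_n)}. -/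
noncomputable section

/-- The largest gap of a finite set of reals: the maximum of `b - a` over pairs `a < b` of
elements with no element strictly between them (`0` for a singleton). -/
def largestGap (s : Finset ℝ) : ℝ :=
  sSup {d : ℝ | ∃ a ∈ s, ∃ b ∈ s, a < b ∧ (∀ x ∈ s, ¬(a < x ∧ x < b)) ∧ d = b - a}

/-!
Scaling the `n`-th digit set by `γ ^ (-(n + 1))` reduces the theorem to a statement about sums of
finite sets of reals. The digits are chosen greedily so that the remainder of the target always
lies between the tails of the series of minima and of maxima. If those tails bound an interval
`[L, U]` after the current digit, the intervals `a + [L, U]` with `a` in the current set overlap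
as soon as its largest gap is at most `U - L`, so a suitable digit exists at every stage. Both
tails tend to `0`, and the remainder with them.
-/

open Filter Topology Set

section LargestGap

variable {s : Finset ℝ} {a b c L M m t U : ℝ}

lemma sub_le_largestGap (ha : a ∈ s) (hb : b ∈ s) (hab : a < b)
    (hgap : ∀ x ∈ s, ¬(a < x ∧ x < b)) : b - a ≤ largestGap s := by
  refine le_csSup ?_ ⟨a, ha, b, hb, hab, hgap, rfl⟩
  refine ((s ×ˢ s).image fun p : ℝ × ℝ ↦ p.2 - p.1).finite_toSet.bddAbove.mono ?_
  rintro d ⟨x, hx, y, hy, -, -, rfl⟩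
  exact Finset.mem_image.2 ⟨(x, y), Finset.mk_mem_product hx hy, rfl⟩

open scoped Pointwise in
lemma largestGap_image_div (s : Finset ℝ) (hc : 0 < c) :
    largestGap (s.image (· / c)) = largestGap s / c := by
  rw [largestGap, largestGap, div_eq_inv_mul, ← smul_eq_mul,
    ← Real.sSup_smul_of_nonneg (inv_nonneg.2 hc.le)]
  congr 1
  ext d
  simp only [Finset.exists_mem_image, Finset.forall_mem_image, div_lt_div_iff_of_pos_right hc,
    mem_smul_set, mem_ofPred_eq, smul_eq_mul, ← div_eq_inv_mul, ← sub_div]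
  constructor
  · rintro ⟨a, ha, b, hb, hab, hgap, rfl⟩
    exact ⟨b - a, ⟨a, ha, b, hb, hab, hgap, rfl⟩, rfl⟩
  · rintro ⟨_, ⟨a, ha, b, hb, hab, hgap, rfl⟩, rfl⟩
    exact ⟨a, ha, b, hb, hab, hgap, rfl⟩

lemma exists_sub_mem_Ico_largestGap (hm : m ∈ s) (hM : M ∈ s) (ht : t ∈ Ico m M) :
    ∃ a ∈ s, t - a ∈ Ico 0 (largestGap s) := by
  obtain ⟨a, ha, ha_max⟩ := (s.filter (· ≤ t)).exists_maximal ⟨m, by simp [hm, ht.1]⟩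
  obtain ⟨b, hb, hb_min⟩ := (s.filter (t < ·)).exists_minimal ⟨M, by simp [hM, ht.2]⟩
  simp only [Finset.mem_filter] at ha hb ha_max hb_min
  have consecutive : ∀ x ∈ s, ¬(a < x ∧ x < b) := by
    rintro x hx ⟨hax, hxb⟩
    rcases le_or_gt x t with hxt | htx
    · exact hax.not_ge (ha_max ⟨hx, hxt⟩ hax.le)
    · exact hxb.not_ge (hb_min ⟨hx, htx⟩ hxb.le)
  have hba := sub_le_largestGap ha.1 hb.1 (ha.2.trans_lt hb.2) consecutive
  exact ⟨a, ha.1, by linarith, by linarith⟩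

lemma exists_sub_mem_Icc_of_largestGap_le (hm : m ∈ s) (hM : M ∈ s)
    (hgap : largestGap s ≤ U - L) (ht : t ∈ Icc (m + L) (M + U)) :
    ∃ a ∈ s, t - a ∈ Icc L U := by
  rcases lt_or_ge (t - L) M with hlt | hge
  · obtain ⟨a, ha, hLa, haU⟩ :=
      exists_sub_mem_Ico_largestGap hm hM ⟨le_sub_iff_add_le.2 ht.1, hlt⟩
    exact ⟨a, ha, by linarith, by linarith⟩
  · exact ⟨M, hM, by linarith, by linarith [ht.2]⟩

end LargestGap

section SumsOfSets

lemma exists_seq_sub_sum_range_mem {G : Type*} [AddCommGroup G] {B I : ℕ → Set G} {x : G}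
    (hx : x ∈ I 0) (step : ∀ n, ∀ r ∈ I n, ∃ b ∈ B n, r - b ∈ I (n + 1)) :
    ∃ b : ℕ → G, (∀ n, b n ∈ B n) ∧ ∀ n, x - ∑ i ∈ Finset.range n, b i ∈ I n := by
  choose b hbB hbI using step
  let r (n : ℕ) : I n :=
    Nat.rec ⟨x, hx⟩ (fun k r ↦ ⟨r - b k r r.2, hbI k r r.2⟩) n
  refine ⟨fun n ↦ b n (r n).1 (r n).2, fun n ↦ hbB n (r n).1 (r n).2, fun n ↦ ?_⟩
  suffices h : x - ∑ i ∈ Finset.range n, b i (r i).1 (r i).2 = (r n).1 by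
    simp only [h, Subtype.coe_prop]
  induction n with
  | zero => simp [r]
  | succ n ih => rw [Finset.sum_range_succ, ← sub_sub, ih]

lemma tsum_nat_add_eq_add_tsum_nat_add_succ {G : Type*} [AddCommGroup G] [TopologicalSpace G]
    [IsTopologicalAddGroup G] [T2Space G] {f : ℕ → G} (hf : Summable f) (n : ℕ) :
    ∑' i, f (i + n) = f n + ∑' i, f (i + (n + 1)) := by
  rw [((summable_nat_add_iff n).2 hf).tsum_eq_zero_add, zero_add]
  simp only [add_right_comm, add_assoc]

variable {b m M : ℕ → ℝ} {x : ℝ}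

lemma hasSum_of_sub_sum_range_mem_Icc_tsum (hm : Summable m) (hM : Summable M)
    (hb : ∀ n, b n ∈ Icc (m n) (M n))
    (hx : ∀ n, x - ∑ i ∈ Finset.range n, b i ∈ Icc (∑' i, m (i + n)) (∑' i, M (i + n))) :
    HasSum b x := by
  have b_sub_m_summable : Summable fun n ↦ b n - m n :=
    (hM.sub hm).of_nonneg_of_le (fun n ↦ sub_nonneg.2 (hb n).1)
      fun n ↦ sub_le_sub_right (hb n).2 _
  have b_summable : Summable b := by simpa using b_sub_m_summable.add hm
  have remainder_tendsto :
      Tendsto (fun n ↦ x - ∑ i ∈ Finset.range n, b i) atTop (𝓝 0) :=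
    tendsto_of_tendsto_of_tendsto_of_le_of_le (tendsto_sum_nat_add m) (tendsto_sum_nat_add M)
      (fun n ↦ (hx n).1) fun n ↦ (hx n).2
  rw [b_summable.hasSum_iff_tendsto_nat]
  simpa using remainder_tendsto.const_sub x

/-- For `B n = {0, a n}` with `a n > 0` this is Kakeya's criterion for the subsums of a series to
fill an interval. -/
theorem exists_hasSum_of_largestGap_le {B : ℕ → Finset ℝ}
    (hmB : ∀ n, IsLeast (B n : Set ℝ) (m n)) (hMB : ∀ n, IsGreatest (B n : Set ℝ) (M n))
    (hm : Summable m) (hM : Summable M)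
    (hgap : ∀ n, largestGap (B n) ≤ ∑' i, (M (i + (n + 1)) - m (i + (n + 1))))
    (hx : x ∈ Icc (∑' n, m n) (∑' n, M n)) :
    ∃ b : ℕ → ℝ, (∀ n, b n ∈ B n) ∧ HasSum b x := by
  let I (n : ℕ) : Set ℝ := Icc (∑' i, m (i + n)) (∑' i, M (i + n))
  have step : ∀ n, ∀ r ∈ I n, ∃ b ∈ (B n : Set ℝ), r - b ∈ I (n + 1) := by
    intro n r hr
    refine exists_sub_mem_Icc_of_largestGap_le (hmB n).1 (hMB n).1 ?_ ?_
    · rw [← ((summable_nat_add_iff _).2 hM).tsum_sub ((summable_nat_add_iff _).2 hm)]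
      exact hgap n
    · rwa [← tsum_nat_add_eq_add_tsum_nat_add_succ hm, ← tsum_nat_add_eq_add_tsum_nat_add_succ hM]
  obtain ⟨b, hbB, hb⟩ := exists_seq_sub_sum_range_mem hx step
  exact ⟨b, hbB, hasSum_of_sub_sum_range_mem_Icc_tsum hm hM
    (fun n ↦ ⟨(hmB n).2 (hbB n), (hMB n).2 (hbB n)⟩) hb⟩

end SumsOfSets

section Image

variable {α β : Type*} [Preorder α] [Preorder β] [DecidableEq β] {f : α → β} {s : Finset α} {a : α}

lemma isLeast_coe_image (hf : Monotone f) (ha : IsLeast (s : Set α) a) :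
    IsLeast (s.image f : Set β) (f a) := by
  rw [Finset.coe_image]
  exact hf.map_isLeast ha

lemma isGreatest_coe_image (hf : Monotone f) (ha : IsGreatest (s : Set α) a) :
    IsGreatest (s.image f : Set β) (f a) := by
  rw [Finset.coe_image]
  exact hf.map_isGreatest ha

end Image

section Digits

variable {d : ℕ → ℝ} {c x β γ : ℝ}

lemma summable_div_pow_succ_of_le (hd : ∀ n, 0 ≤ d n) (hdc : ∀ n, d n ≤ c) (hγ : 1 < γ) :
    Summable fun n ↦ d n / γ ^ (n + 1) := by
  have hγ₀ : 0 < γ := zero_lt_one.trans hγ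
  have geometric : Summable fun n : ℕ ↦ c * γ⁻¹ ^ (n + 1) :=
    ((summable_nat_add_iff 1).2 <|
      summable_geometric_of_lt_one (inv_nonneg.2 hγ₀.le) (inv_lt_one_of_one_lt₀ hγ)).mul_left c
  refine geometric.of_nonneg_of_le (fun n ↦ div_nonneg (hd n) (by positivity)) fun n ↦ ?_
  rw [inv_pow, ← div_eq_mul_inv]
  gcongr
  exact hdc n

lemma div_pow_succ_le_div_pow_succ (hd : ∀ n, 0 ≤ d n) (hβ : 0 < β) (hβγ : β ≤ γ) (n : ℕ) :
    d n / γ ^ (n + 1) ≤ d n / β ^ (n + 1) := by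
  have := hd n
  gcongr

lemma summable_div_pow_succ_of_base_le (hd : ∀ n, 0 ≤ d n) (hβ : 0 < β) (hβγ : β ≤ γ)
    (hs : Summable fun n ↦ d n / β ^ (n + 1)) : Summable fun n ↦ d n / γ ^ (n + 1) :=
  hs.of_nonneg_of_le (fun n ↦ div_nonneg (hd n) (pow_nonneg (hβ.le.trans hβγ) _))
    (div_pow_succ_le_div_pow_succ hd hβ hβγ)

lemma tsum_div_pow_succ_le_of_base_le (hd : ∀ n, 0 ≤ d n) (hβ : 0 < β) (hβγ : β ≤ γ)
    (hs : Summable fun n ↦ d n / β ^ (n + 1)) :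
    ∑' n, d n / γ ^ (n + 1) ≤ ∑' n, d n / β ^ (n + 1) :=
  (summable_div_pow_succ_of_base_le hd hβ hβγ hs).tsum_le_tsum
    (div_pow_succ_le_div_pow_succ hd hβ hβγ) hs

variable {A : ℕ → Finset ℝ} {ℓ u : ℕ → ℝ}

theorem exists_digits_hasSum_of_mem_Icc (hℓ : ∀ n, IsLeast (A n : Set ℝ) (ℓ n))
    (hu : ∀ n, IsGreatest (A n : Set ℝ) (u n)) (hγ : 0 < γ)
    (hsℓ : Summable fun n ↦ ℓ n / γ ^ (n + 1)) (hsu : Summable fun n ↦ u n / γ ^ (n + 1))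
    (hgap : ∀ n, largestGap (A n) ≤
      ∑' i, (u (n + i + 1) - ℓ (n + i + 1)) / γ ^ (i + 1))
    (hx : x ∈ Icc (∑' n, ℓ n / γ ^ (n + 1)) (∑' n, u n / γ ^ (n + 1))) :
    ∃ a : ℕ → ℝ, (∀ n, a n ∈ A n) ∧ HasSum (fun n ↦ a n / γ ^ (n + 1)) x := by
  have div_mono (n : ℕ) : Monotone (· / γ ^ (n + 1)) := monotone_div_right_of_nonneg (by positivity)
  have scaled_gap (n : ℕ) : largestGap ((A n).image (· / γ ^ (n + 1))) ≤
      ∑' i, (u (i + (n + 1)) / γ ^ (i + (n + 1) + 1) -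
        ℓ (i + (n + 1)) / γ ^ (i + (n + 1) + 1)) := calc
    _ = largestGap (A n) / γ ^ (n + 1) := largestGap_image_div _ (by positivity)
    _ ≤ (∑' i, (u (n + i + 1) - ℓ (n + i + 1)) / γ ^ (i + 1)) / γ ^ (n + 1) := by
      gcongr
      exact hgap n
    _ = _ := by
      rw [← tsum_div_const]
      refine tsum_congr fun i ↦ ?_
      rw [div_div, ← pow_add, ← sub_div, ← add_assoc, ← add_assoc, add_right_comm i 1 n,
        add_comm n i]
  obtain ⟨b, hbA, hb⟩ := exists_hasSum_of_largestGap_le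
    (fun n ↦ isLeast_coe_image (div_mono n) (hℓ n))
    (fun n ↦ isGreatest_coe_image (div_mono n) (hu n)) hsℓ hsu scaled_gap hx
  choose a haA ha using fun n ↦ Finset.mem_image.1 (hbA n)
  exact ⟨a, haA, by simpa only [ha] using hb⟩

theorem digit_sequence_exists_general {γℓ γu : ℝ} (hℓ : ∀ n, IsLeast (A n : Set ℝ) (ℓ n))
    (hu : ∀ n, IsGreatest (A n : Set ℝ) (u n)) (hℓ₀ : ∀ n, 0 ≤ ℓ n)
    (hγℓ₀ : 0 < γℓ) (hγℓ : ∑' n, ℓ n / γℓ ^ (n + 1) = 1)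
    (hγu : ∑' n, u n / γu ^ (n + 1) = 1) (hγ₁ : γℓ ≤ γ) (hγ₂ : γ ≤ γu)
    (hsu : Summable fun n ↦ u n / γ ^ (n + 1))
    (hgap : ∀ n, largestGap (A n) ≤
      ∑' i, (u (n + i + 1) - ℓ (n + i + 1)) / γ ^ (i + 1)) :
    ∃ a : ℕ → ℝ, (∀ n, a n ∈ A n) ∧ HasSum (fun n ↦ a n / γ ^ (n + 1)) 1 := by
  have hγ₀ : 0 < γ := hγℓ₀.trans_le hγ₁
  have hu₀ (n : ℕ) : 0 ≤ u n := (hℓ₀ n).trans ((hu n).2 (hℓ n).1)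
  have hsℓ : Summable fun n ↦ ℓ n / γℓ ^ (n + 1) :=
    not_imp_comm.1 tsum_eq_zero_of_not_summable (hγℓ ▸ one_ne_zero)
  refine exists_digits_hasSum_of_mem_Icc hℓ hu hγ₀
    (summable_div_pow_succ_of_base_le hℓ₀ hγℓ₀ hγ₁ hsℓ) hsu hgap ⟨?_, ?_⟩
  · exact hγℓ ▸ tsum_div_pow_succ_le_of_base_le hℓ₀ hγℓ₀ hγ₁ hsℓ
  · exact hγu ▸ tsum_div_pow_succ_le_of_base_le hu₀ hγ₀ hγ₂ hsu

end Digits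

/-- Suppose `(A n)` is a sequence of nonempty finite sets of positive integers with bounded
maxima (here `A n` is the `(n+1)`-st set, weighted by `γ^-(n+1)`).  Let `γℓ` and `γu` be
the unique bases `> 1` for which the minimal and maximal digit sequences sum to `1`.  Then
every `γ ∈ [γℓ, γu]` satisfying the gap inequalities arises as
`Σ_{n ≥ 1} a_n γ^(-n) = 1` for some choice of digits `a n ∈ A n`. -/
theorem digit_sequence_exists (A : ℕ → Finset ℕ) (hne : ∀ n, (A n).Nonempty)
    (hpos : ∀ n, ∀ x ∈ A n, 0 < x) (c : ℕ) (hbd : ∀ n, (A n).max' (hne n) ≤ c)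
    (γℓ γu γ : ℝ)
    (hγℓ : 1 < γℓ ∧ ∑' n : ℕ, ((A n).min' (hne n) : ℝ) / γℓ ^ (n + 1) = 1)
    (hγu : 1 < γu ∧ ∑' n : ℕ, ((A n).max' (hne n) : ℝ) / γu ^ (n + 1) = 1)
    (hγ₁ : γℓ ≤ γ) (hγ₂ : γ ≤ γu)
    (hgap : ∀ n : ℕ, largestGap ((A n).image (fun m : ℕ => (m : ℝ))) ≤
      ∑' i : ℕ,
        (((A (n + i + 1)).max' (hne (n + i + 1)) : ℝ) -
          ((A (n + i + 1)).min' (hne (n + i + 1)) : ℝ)) / γ ^ (i + 1)) :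
    ∃ a : ℕ → ℕ, (∀ n, a n ∈ A n) ∧ ∑' n : ℕ, (a n : ℝ) / γ ^ (n + 1) = 1 := by
  obtain ⟨a, haA, ha⟩ := digit_sequence_exists_general
    (fun n ↦ isLeast_coe_image Nat.mono_cast ((A n).isLeast_min' (hne n)))
    (fun n ↦ isGreatest_coe_image Nat.mono_cast ((A n).isGreatest_max' (hne n)))
    (fun _ ↦ Nat.cast_nonneg _) (zero_lt_one.trans hγℓ.1) hγℓ.2 hγu.2 hγ₁ hγ₂
    (summable_div_pow_succ_of_le (fun _ ↦ Nat.cast_nonneg _) (fun n ↦ Nat.cast_le.2 (hbd n))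
      (hγℓ.1.trans_le hγ₁)) hgap
  choose digit hdigitA hdigit using fun n ↦ Finset.mem_image.1 (haA n)
  exact ⟨digit, hdigitA, by simpa only [hdigit] using ha.tsum_eq⟩
end
end

section
/- Let θ_B ≈ 2.35526 be the unique real root of the polynomial x⁷ − 2x⁶ − x⁴ − x³ − 2x² − 2x − 1. For every ε > 0, there exist real numbers δ₁ and δ₂ with 0 < δ₁ < δ₂ < ε such that for every real γ in the interval [θ_B + δ₁, θ_B + δ₂] there is a permutation class C whose growth rate exists and equals γ, i.e., lim_{n→∞} |C_n|^{1/n} = γ. -/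
noncomputable section

open Filter

/-- Pattern containment: `τ` is contained in `σ`. -/
def PermContains {k n : ℕ} (τ : Equiv.Perm (Fin k)) (σ : Equiv.Perm (Fin n)) : Prop :=
  ∃ f : Fin k → Fin n, StrictMono f ∧ ∀ a b : Fin k, τ a < τ b ↔ σ (f a) < σ (f b)

/-- A permutation class: a set of permutations closed downward under containment. -/
def IsPermClass (C : ∀ n : ℕ, Set (Equiv.Perm (Fin n))) : Prop :=
  ∀ (n : ℕ) (σ : Equiv.Perm (Fin n)), σ ∈ C n →
    ∀ (k : ℕ) (τ : Equiv.Perm (Fin k)), PermContains τ σ → τ ∈ C k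

/-!
Encode a permutation by its Lehmer code. Deleting an entry acts on codes by `eraseRank`, so a set of
codes closed under `eraseRank` gives a permutation class with as many permutations of length `n` as
there are codes. The words freely generated by the blocks `1ʳ (20)ʲ 1ˢ 0` are closed under
`eraseRank` as soon as, for every `j`, the admissible `(r, s)` form a lower set containing a hook;
being free, they have growth rate `γ`, where `γ` solves `∑ γ ^ (-length) = 1` over the blocks.

The shape beyond the hook can be chosen independently for every `j`, among seven corners. The
possible contributions of these choices are the expansions in base `γ ^ (-2)` with seven digits;
near `θ_B` the gaps between the digits are small enough for the expansions to fill an interval.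
Corners starting at `j = N + 1` therefore realise every `γ` for which a multiple of
`p γ * γ ^ (2 * N)` is in that interval, where `p` is the polynomial defining `θ_B`. As `p` vanishes
at `θ_B`, such `γ` fill an interval arbitrarily close to `θ_B` for large `N`.
-/

/-! ### Renewal sequences -/

section Renewal

open Finset

variable {a b : ℕ → ℕ} {γ g : ℝ}

/-- The renewal equation: `a` counts the sequences of total size `n` of objects of positive size,
of which there are `b k` of size `k`; the value `b 0` is irrelevant. -/
structure IsRenewal (b a : ℕ → ℕ) : Prop where
  zero : a 0 = 1
  succ : ∀ n, a (n + 1) = ∑ k ∈ range (n + 1), b (k + 1) * a (n - k)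

lemma pow_succ_mul_sum_inv_pow (hγ : γ ≠ 0) (c : ℕ → ℝ) {n K : ℕ} (hK : K ≤ n + 1) :
    γ ^ (n + 1) * ∑ k ∈ range K, c k * γ⁻¹ ^ (k + 1) = ∑ k ∈ range K, c k * γ ^ (n - k) := by
  rw [mul_sum]
  refine sum_congr rfl fun k hk => ?_
  have hkn : n + 1 = (n - k) + (k + 1) := by grind
  rw [hkn, pow_add, inv_pow]
  field_simp

lemma IsRenewal.one_le (h : IsRenewal b a) (hb : 1 ≤ b 1) (n : ℕ) : 1 ≤ a n := by
  induction n with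
  | zero => exact h.zero.ge
  | succ n ih =>
    rw [h.succ]
    calc 1 ≤ b (0 + 1) * a (n - 0) := Nat.mul_pos hb ih
      _ ≤ _ := single_le_sum (f := fun k => b (k + 1) * a (n - k)) (fun _ _ => Nat.zero_le _)
        (mem_range.2 n.succ_pos)

lemma IsRenewal.le_pow (h : IsRenewal b a) (hγ : 0 < γ)
    (hsum : ∀ K, ∑ k ∈ range K, (b (k + 1) : ℝ) * γ⁻¹ ^ (k + 1) ≤ 1) (n : ℕ) :
    (a n : ℝ) ≤ γ ^ n := by
  induction n using Nat.strong_induction_on with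
  | _ n ih =>
    cases n with
    | zero => simp [h.zero]
    | succ n =>
      rw [h.succ]
      push_cast
      calc ∑ k ∈ range (n + 1), (b (k + 1) : ℝ) * a (n - k)
          ≤ ∑ k ∈ range (n + 1), (b (k + 1) : ℝ) * γ ^ (n - k) := by
            gcongr with k
            exact ih _ (by omega)
        _ = γ ^ (n + 1) * ∑ k ∈ range (n + 1), (b (k + 1) : ℝ) * γ⁻¹ ^ (k + 1) :=
            (pow_succ_mul_sum_inv_pow hγ.ne' _ le_rfl).symm
        _ ≤ γ ^ (n + 1) := mul_le_of_le_one_right (by positivity) (hsum _)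

lemma IsRenewal.mul_pow_le (h : IsRenewal b a) (hb : 1 ≤ b 1) (hg : 1 ≤ g) {K : ℕ}
    (hsum : 1 ≤ ∑ k ∈ range K, (b (k + 1) : ℝ) * g⁻¹ ^ (k + 1)) (n : ℕ) :
    (g ^ K)⁻¹ * g ^ n ≤ a n := by
  have hg0 : 0 < g := by linarith
  induction n using Nat.strong_induction_on with
  | _ n ih =>
    rcases le_or_gt n K with hn | hn
    · calc (g ^ K)⁻¹ * g ^ n ≤ 1 := by
            rw [inv_mul_le_one₀ (by positivity)]
            exact pow_le_pow_right₀ hg hn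
        _ ≤ a n := mod_cast h.one_le hb n
    · obtain ⟨n, rfl⟩ := Nat.exists_eq_add_of_lt (Nat.zero_lt_of_lt hn)
      rw [zero_add] at hn ih ⊢
      rw [h.succ]
      push_cast
      calc (g ^ K)⁻¹ * g ^ (n + 1)
          ≤ (g ^ K)⁻¹ * (g ^ (n + 1) * ∑ k ∈ range K, (b (k + 1) : ℝ) * g⁻¹ ^ (k + 1)) := by
            gcongr
            exact le_mul_of_one_le_right (by positivity) hsum
        _ = ∑ k ∈ range K, (b (k + 1) : ℝ) * ((g ^ K)⁻¹ * g ^ (n - k)) := by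
            rw [pow_succ_mul_sum_inv_pow hg0.ne' _ hn.le, mul_sum]
            exact sum_congr rfl fun k _ => mul_left_comm _ _ _
        _ ≤ ∑ k ∈ range K, (b (k + 1) : ℝ) * a (n - k) := by
            gcongr with k
            exact ih _ (by omega)
        _ ≤ ∑ k ∈ range (n + 1), (b (k + 1) : ℝ) * a (n - k) :=
            sum_le_sum_of_subset_of_nonneg (range_mono hn.le) fun _ _ _ => by positivity

lemma exists_one_le_sum_of_hasSum {c : ℕ → ℝ} (hc : ∀ k, 0 ≤ c k) {x y : ℝ} (hx : 0 < x)
    (hxy : x < y) (hsum : HasSum (fun k => c k * x ^ (k + 1)) 1) :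
    ∃ K, 1 ≤ ∑ k ∈ range K, c k * y ^ (k + 1) := by
  have hlt : x / y < 1 := (div_lt_one (hx.trans hxy)).2 hxy
  obtain ⟨K, hK⟩ := ((tendsto_order.1 hsum.tendsto_sum_nat).1 _ hlt).exists
  have hratio : 1 ≤ y / x := (one_le_div hx).2 hxy.le
  refine ⟨K, ?_⟩
  calc (1 : ℝ) ≤ y / x * ∑ k ∈ range K, c k * x ^ (k + 1) := by
        rw [← div_le_iff₀' (by positivity), one_div_div]
        exact hK.le
    _ ≤ ∑ k ∈ range K, c k * y ^ (k + 1) := by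
        rw [mul_sum]
        refine sum_le_sum fun k _ => ?_
        calc y / x * (c k * x ^ (k + 1)) ≤ (y / x) ^ (k + 1) * (c k * x ^ (k + 1)) :=
              mul_le_mul_of_nonneg_right (le_self_pow₀ hratio k.succ_ne_zero)
                (mul_nonneg (hc k) (by positivity))
          _ = c k * y ^ (k + 1) := by rw [div_pow]; field_simp

lemma tendsto_rpow_one_div_of_le_pow {u : ℕ → ℝ} {r : ℝ} (hr : 0 ≤ r) (hrγ : r < γ)
    (hupper : ∀ n, u n ≤ γ ^ n)
    (hlower : ∀ g, r < g → g < γ → ∃ c > 0, ∀ n, c * g ^ n ≤ u n) :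
    Tendsto (fun n : ℕ => u n ^ (1 / (n : ℝ))) atTop (nhds γ) := by
  refine tendsto_order.2 ⟨fun x hx => ?_, fun x hx => ?_⟩
  · obtain ⟨g, hg, hgγ⟩ := exists_between (max_lt hx hrγ)
    obtain ⟨hxg, hrg⟩ := max_lt_iff.1 hg
    obtain ⟨c, hc, hcu⟩ := hlower g hrg hgγ
    have hg0 : 0 ≤ g := hr.trans hrg.le
    have hlim : Tendsto (fun n : ℕ => c ^ (1 / (n : ℝ)) * g) atTop (nhds g) := by
      simpa using ((Real.continuousAt_const_rpow (b := 0) hc.ne').tendsto.comp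
        tendsto_one_div_atTop_nhds_zero_nat).mul_const g
    filter_upwards [hlim.eventually_const_lt hxg, eventually_ne_atTop 0] with n hn hn0
    calc x < c ^ (1 / (n : ℝ)) * g := hn
      _ = (c * g ^ n) ^ (1 / (n : ℝ)) := by
        rw [Real.mul_rpow hc.le (by positivity), one_div, Real.pow_rpow_inv_natCast hg0 hn0]
      _ ≤ u n ^ (1 / (n : ℝ)) := Real.rpow_le_rpow (by positivity) (hcu n) (by positivity)
  · obtain ⟨g, hrg, hgγ⟩ := exists_between hrγ
    obtain ⟨c, hc, hcu⟩ := hlower g hrg hgγ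
    have hg0 : 0 ≤ g := hr.trans hrg.le
    filter_upwards [eventually_ne_atTop 0] with n hn0
    have hu : 0 ≤ u n := le_trans (by positivity) (hcu n)
    calc u n ^ (1 / (n : ℝ)) ≤ (γ ^ n) ^ (1 / (n : ℝ)) :=
          Real.rpow_le_rpow hu (hupper n) (by positivity)
      _ = γ := by rw [one_div, Real.pow_rpow_inv_natCast (hg0.trans hgγ.le) hn0]
      _ < x := hx

theorem IsRenewal.tendsto_rpow_one_div (h : IsRenewal b a) (hb : 1 ≤ b 1) (hγ : 1 < γ)
    (hsum : HasSum (fun k => (b (k + 1) : ℝ) * γ⁻¹ ^ (k + 1)) 1) :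
    Tendsto (fun n : ℕ => (a n : ℝ) ^ (1 / (n : ℝ))) atTop (nhds γ) := by
  have hγ0 : 0 < γ := by linarith
  refine tendsto_rpow_one_div_of_le_pow zero_le_one hγ (h.le_pow hγ0 fun K =>
    sum_le_hasSum _ (fun k _ => by positivity) hsum) fun g hg hgγ => ?_
  have hg0 : 0 < g := by linarith
  obtain ⟨K, hK⟩ := exists_one_le_sum_of_hasSum (fun k => (b (k + 1)).cast_nonneg)
    (inv_pos.2 hγ0) (inv_strictAnti₀ hg0 hgγ) hsum
  exact ⟨(g ^ K)⁻¹, by positivity, h.mul_pow_le hb hg.le hK⟩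

end Renewal

/-! ### Expansions in a non-integer base -/

section Expansion

variable {q : ℝ} {m : ℕ} {D : Fin (m + 1) → ℝ} {x : ℝ}

lemma hasSum_pow_mul_sub_mul {z : ℕ → ℝ} {M : ℝ} (hq : |q| < 1) (hz : ∀ n, |z n| ≤ M) :
    HasSum (fun n => q ^ n * (z n - q * z (n + 1))) (z 0) := by
  have hsummable : Summable fun n => q ^ n * z n := by
    refine Summable.of_norm_bounded
      ((summable_geometric_of_lt_one (abs_nonneg q) hq).mul_right M) fun n => ?_
    rw [norm_mul, norm_pow, Real.norm_eq_abs, Real.norm_eq_abs]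
    exact mul_le_mul_of_nonneg_left (hz n) (by positivity)
  have htelescope := hsummable.hasSum.sub ((hasSum_nat_add_iff' 1).2 hsummable.hasSum)
  rw [Finset.sum_range_one, pow_zero, one_mul, sub_sub_cancel] at htelescope
  exact htelescope.congr_fun fun n => by ring

lemma exists_digit (hgap : ∀ i : Fin m,
      D i.succ - D i.castSucc ≤ q * ((D (Fin.last m) - D 0) / (1 - q)))
    (hq : q < 1) (hx : x ∈ Set.Icc (D 0 / (1 - q)) (D (Fin.last m) / (1 - q))) :
    ∃ i, x - D i ∈ Set.Icc (q * (D 0 / (1 - q))) (q * (D (Fin.last m) / (1 - q))) := by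
  have hsplit (d : ℝ) : d + q * (d / (1 - q)) = d / (1 - q) := by
    have : 1 - q ≠ 0 := by linarith
    field_simp
    ring
  by_contra! hno
  have hlow (i : Fin (m + 1)) : D i + q * (D 0 / (1 - q)) ≤ x := by
    induction i using Fin.induction with
    | zero => rw [hsplit]; exact hx.1
    | succ i ih =>
      have hhigh : q * (D (Fin.last m) / (1 - q)) < x - D i.castSucc := by
        by_contra! hle
        exact hno i.castSucc ⟨by linarith, hle⟩
      have := hgap i
      rw [sub_div, mul_sub] at this
      linarith
  refine hno (Fin.last m) ⟨by linarith [hlow (Fin.last m)], ?_⟩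
  have := hsplit (D (Fin.last m))
  linarith [hx.2]

theorem exists_hasSum_pow_mul_digit (hq0 : 0 < q) (hq : q < 1)
    (hgap : ∀ i : Fin m, D i.succ - D i.castSucc ≤ q * ((D (Fin.last m) - D 0) / (1 - q)))
    (hx : x ∈ Set.Icc (D 0 / (1 - q)) (D (Fin.last m) / (1 - q))) :
    ∃ κ : ℕ → Fin (m + 1), HasSum (fun n => q ^ n * D (κ n)) x := by
  set I := Set.Icc (D 0 / (1 - q)) (D (Fin.last m) / (1 - q))
  have hstep (y : I) : ∃ i, ∃ y' : I, (y : ℝ) - q * y' = D i := by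
    obtain ⟨i, hi⟩ := exists_digit hgap hq y.2
    refine ⟨i, ⟨(y - D i) / q, ?_⟩, by field_simp; ring⟩
    exact ⟨(le_div_iff₀' hq0).2 hi.1, (div_le_iff₀' hq0).2 hi.2⟩
  choose digit next hdigit using hstep
  let z (n : ℕ) : I := next^[n] ⟨x, hx⟩
  refine ⟨fun n => digit (z n), ?_⟩
  have hsucc (n : ℕ) : z (n + 1) = next (z n) := Function.iterate_succ_apply' _ _ _
  exact (hasSum_pow_mul_sub_mul (z := fun n => z n) (abs_lt.2 ⟨by linarith, hq⟩)
    fun n => abs_le_max_abs_abs (z n).2.1 (z n).2.2).congr_fun fun n => by rw [hsucc, hdigit]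

end Expansion

/-! ### Words over a uniquely decodable code -/

section Language

open Computability InformationTheory

variable {α : Type*} {B L : Language α}

/-- The words of length `n` in a language. -/
def wordsOfLength (L : Language α) (n : ℕ) : Set (List α) := {w | w ∈ L ∧ w.length = n}

lemma append_mem_kstar {u w : List α} (hu : u ∈ B) (hw : w ∈ B∗) : u ++ w ∈ B∗ := by
  obtain ⟨l, rfl, hl⟩ := Language.mem_kstar.1 hw
  exact Language.mem_kstar.2 ⟨u :: l, rfl, List.forall_mem_cons.2 ⟨hu, hl⟩⟩

lemma kstar_induction {p : List α → Prop} (nil : p [])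
    (append : ∀ u ∈ B, ∀ w ∈ B∗, p w → p (u ++ w)) {w : List α} (hw : w ∈ B∗) : p w := by
  obtain ⟨l, rfl, hl⟩ := Language.mem_kstar.1 hw
  induction l with
  | nil => exact nil
  | cons u l ih =>
    obtain ⟨hu, hl⟩ := List.forall_mem_cons.1 hl
    exact append u hu _ (Language.join_mem_kstar hl) (ih hl (Language.join_mem_kstar hl))

lemma exists_append_of_mem_kstar {w : List α} (hw : w ∈ B∗) (hne : w ≠ []) :
    ∃ u ∈ B, ∃ v ∈ B∗, w = u ++ v := by
  rw [← Language.one_add_self_mul_kstar_eq_kstar] at hw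
  obtain rfl | ⟨u, hu, v, hv, rfl⟩ := hw
  · exact absurd rfl hne
  · exact ⟨u, hu, v, hv, rfl⟩

lemma uniquelyDecodable_of_append_inj (hnil : [] ∉ B)
    (hB : ∀ u ∈ B, ∀ v ∈ B, ∀ w w', u ++ w = v ++ w' → u = v) : UniquelyDecodable B := by
  intro l
  induction l with
  | nil =>
    rintro (_ | ⟨v, l'⟩) - hl' h
    · rfl
    · exact absurd ((List.append_eq_nil_iff.1 h.symm).1 ▸ hl' v List.mem_cons_self) hnil
  | cons u l ih =>
    rintro (_ | ⟨v, l'⟩) hl hl' h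
    · exact absurd ((List.append_eq_nil_iff.1 h).1 ▸ hl u List.mem_cons_self) hnil
    · obtain ⟨hu, htail⟩ := List.forall_mem_cons.1 hl
      obtain ⟨hv, htail'⟩ := List.forall_mem_cons.1 hl'
      obtain rfl := hB u hu v hv _ _ h
      rw [ih l' htail htail' (List.append_cancel_left h)]

lemma append_inj_of_uniquelyDecodable (hB : UniquelyDecodable B) {u v w w' : List α} (hu : u ∈ B)
    (hv : v ∈ B) (hw : w ∈ B∗) (hw' : w' ∈ B∗) (h : u ++ w = v ++ w') : u = v ∧ w = w' := by
  obtain ⟨l, rfl, hl⟩ := Language.mem_kstar.1 hw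
  obtain ⟨l', rfl, hl'⟩ := Language.mem_kstar.1 hw'
  obtain ⟨rfl, rfl⟩ := List.cons.inj <| hB (u :: l) (v :: l') (List.forall_mem_cons.2 ⟨hu, hl⟩)
    (List.forall_mem_cons.2 ⟨hv, hl'⟩) h
  exact ⟨rfl, rfl⟩

/-- Prepending a codeword of length `k + 1` to a concatenation of codewords of length `n - k`. -/
def prependCodeword (B : Language α) (n : ℕ) :
    (Σ k : Fin (n + 1), wordsOfLength B (k + 1) × wordsOfLength B∗ (n - k)) →
      wordsOfLength B∗ (n + 1) :=
  fun p => ⟨p.2.1 ++ p.2.2, append_mem_kstar p.2.1.2.1 p.2.2.2.1, by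
    have := p.1.isLt
    rw [List.length_append, p.2.1.2.2, p.2.2.2.2]
    omega⟩

lemma prependCodeword_injective (hB : UniquelyDecodable B) (n : ℕ) :
    Function.Injective (prependCodeword B n) := by
  rintro ⟨k, ⟨u, hu, huk⟩, ⟨w, hw, hwk⟩⟩ ⟨k', ⟨u', hu', huk'⟩, ⟨w', hw', hwk'⟩⟩ h
  obtain ⟨rfl, rfl⟩ := append_inj_of_uniquelyDecodable hB hu hu' hw hw' (congrArg Subtype.val h)
  obtain rfl : k = k' := Fin.ext (Nat.succ.inj (huk.symm.trans huk'))
  rfl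

lemma prependCodeword_surjective (hnil : [] ∉ B) (n : ℕ) :
    Function.Surjective (prependCodeword B n) := by
  rintro ⟨w, hw, hn⟩
  obtain ⟨u, hu, v, hv, rfl⟩ := exists_append_of_mem_kstar hw (List.ne_nil_of_length_eq_add_one hn)
  have hu0 : 0 < u.length := List.length_pos_of_ne_nil (ne_of_mem_of_not_mem hu hnil)
  rw [List.length_append] at hn
  exact ⟨⟨⟨u.length - 1, by omega⟩, ⟨u, hu, by simp only; omega⟩,
    ⟨v, hv, by simp only; omega⟩⟩, rfl⟩

lemma finite_wordsOfLength_kstar (hnil : [] ∉ B) (hfin : ∀ k, Finite (wordsOfLength B k)) (n : ℕ) :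
    Finite (wordsOfLength B∗ n) := by
  induction n using Nat.strong_induction_on with
  | _ n ih =>
    cases n with
    | zero => exact ((Set.finite_singleton []).subset fun w hw => List.length_eq_zero_iff.1 hw.2)
    | succ n =>
      have (k : Fin (n + 1)) : Finite (wordsOfLength B∗ (n - k)) := ih _ (by omega)
      exact Finite.of_surjective _ (prependCodeword_surjective hnil n)

lemma isRenewal_card_wordsOfLength (hB : UniquelyDecodable B)
    (hfin : ∀ k, Finite (wordsOfLength B k)) :
    IsRenewal (fun k => Nat.card (wordsOfLength B k)) (fun n => Nat.card (wordsOfLength B∗ n)) where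
  zero := by
    have : wordsOfLength B∗ 0 = {[]} := Set.eq_singleton_iff_unique_mem.2
      ⟨⟨Language.nil_mem_kstar B, rfl⟩, fun w hw => List.length_eq_zero_iff.1 hw.2⟩
    rw [this, Nat.card_unique]
  succ n := by
    have (k : Fin (n + 1)) : Finite (wordsOfLength B∗ (n - k)) :=
      finite_wordsOfLength_kstar hB.epsilon_not_mem hfin _
    rw [← Nat.card_congr (Equiv.ofBijective _ ⟨prependCodeword_injective hB n,
      prependCodeword_surjective hB.epsilon_not_mem n⟩), Nat.card_sigma, Finset.sum_range]
    simp only [Nat.card_prod]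

lemma finite_wordsOfLength_of_summable {x : ℝ} (hx : x ≠ 0)
    (hsum : Summable fun w : {w // w ∈ L} => x ^ w.1.length) (n : ℕ) :
    Finite (wordsOfLength L n) := by
  let toWord (w : wordsOfLength L n) : {w // w ∈ L} := ⟨w, w.2.1⟩
  have hinj : Function.Injective toWord := fun _ _ h =>
    Subtype.ext (congrArg (fun w => w.1) h)
  have hconst : Summable fun _ : wordsOfLength L n => x ^ n :=
    (hsum.comp_injective hinj).congr fun w => by simp only [Function.comp_apply, toWord, w.2.2]
  by_contra hinf
  rw [not_finite_iff_infinite] at hinf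
  exact pow_ne_zero n hx ((summable_const_iff _).1 hconst)

lemma hasSum_card_wordsOfLength {x y : ℝ}
    (hsum : HasSum (fun w : {w // w ∈ L} => x ^ w.1.length) y) :
    HasSum (fun n => (Nat.card (wordsOfLength L n) : ℝ) * x ^ n) y := by
  refine (hsum.tsum_fiberwise fun w => w.1.length).congr_fun fun n => ?_
  have hfiber : Nat.card (wordsOfLength L n)
      = Nat.card ((fun w : {w // w ∈ L} => w.1.length) ⁻¹' {n}) :=
    Nat.card_congr (Equiv.subtypeSubtypeEquivSubtypeInter (· ∈ L) (·.length = n)).symm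
  rw [hfiber, ← nsmul_eq_mul, ← tsum_const]
  exact tsum_congr fun w => congrArg (x ^ ·) (Eq.symm w.2)

theorem tendsto_card_wordsOfLength_rpow_one_div {γ : ℝ} (hB : UniquelyDecodable B) (hγ : 1 < γ)
    (hone : (wordsOfLength B 1).Nonempty)
    (hsum : HasSum (fun w : {w // w ∈ B} => γ⁻¹ ^ w.1.length) 1) :
    Tendsto (fun n : ℕ => (Nat.card (wordsOfLength B∗ n) : ℝ) ^ (1 / (n : ℝ))) atTop (nhds γ) := by
  have hfin := finite_wordsOfLength_of_summable (by positivity) hsum.summable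
  refine (isRenewal_card_wordsOfLength hB hfin).tendsto_rpow_one_div
    (Nat.card_pos_iff.2 ⟨hone.to_subtype, hfin 1⟩) hγ ?_
  have hzero : wordsOfLength B 0 = ∅ := Set.eq_empty_of_forall_notMem fun w hw =>
    hB.epsilon_not_mem (List.length_eq_zero_iff.1 hw.2 ▸ hw.1)
  simpa [hzero] using (hasSum_nat_add_iff' 1).2 (hasSum_card_wordsOfLength hsum)

end Language

/-! ### Lehmer codes -/

section LehmerCode

variable {α β ι : Type*} [LinearOrder α] [LinearOrder β]

/-- The Lehmer code of a list: every entry is replaced by the number of smaller entries to its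
right. -/
def lehmerCode : List α → List ℕ
  | [] => []
  | x :: l => l.countP (· < x) :: lehmerCode l

/-- The effect on a Lehmer code of deleting the entry of rank `v` from the list. -/
def eraseRank : ℕ → List ℕ → List ℕ
  | _, [] => []
  | v, c :: w =>
    if v = c then w else if v < c then (c - 1) :: eraseRank v w else c :: eraseRank (v - 1) w

/-- The words which are Lehmer codes, see `exists_perm_lehmerCode_eq`. -/
def IsLehmerCode : List ℕ → Prop
  | [] => True
  | c :: w => c ≤ w.length ∧ IsLehmerCode w

lemma length_lehmerCode : ∀ l : List α, (lehmerCode l).length = l.length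
  | [] => rfl
  | _ :: l => congrArg Nat.succ (length_lehmerCode l)

lemma lehmerCode_map_congr {f : ι → α} {g : ι → β} (hfg : ∀ i j, f i < f j ↔ g i < g j) :
    ∀ l : List ι, lehmerCode (l.map f) = lehmerCode (l.map g)
  | [] => rfl
  | i :: l => by
    simp only [List.map_cons, lehmerCode, List.countP_map, lehmerCode_map_congr hfg l,
      Function.comp_def, hfg]

lemma countP_lt_mono {x y : α} (l : List α) (h : x ≤ y) : l.countP (· < x) ≤ l.countP (· < y) :=
  List.countP_mono_left fun _ _ hz => decide_eq_true ((of_decide_eq_true hz).trans_le h)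

lemma countP_lt_strictMono {x y : α} {l : List α} (hx : x ∈ l) (h : x < y) :
    l.countP (· < x) < l.countP (· < y) := by
  obtain ⟨s, t, rfl⟩ := List.append_of_mem hx
  have hs := countP_lt_mono s h.le
  have ht := countP_lt_mono t h.le
  rw [List.countP_append, List.countP_append, List.countP_cons_of_neg (by simp),
    List.countP_cons_of_pos (by simpa using h)]
  omega

lemma lehmerCode_append_eq_eraseRank (x : α) (l : List α) : ∀ p : List α, (p ++ x :: l).Nodup →
    lehmerCode (p ++ l) = eraseRank ((p ++ l).countP (· < x)) (lehmerCode (p ++ x :: l))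
  | [], _ => by simp [lehmerCode, eraseRank]
  | a :: p, h => by
    rw [List.cons_append, List.nodup_cons, List.mem_append, List.mem_cons] at h
    obtain ⟨ha, hp⟩ := h
    have ih := lehmerCode_append_eq_eraseRank x l p hp
    have hne : a ≠ x := fun hax => ha (Or.inr (Or.inl hax))
    simp only [List.cons_append, lehmerCode]
    rcases lt_or_gt_of_ne hne with hax | hxa
    · have hle := countP_lt_mono (p ++ l) hax.le
      have hx : (p ++ x :: l).countP (· < a) = (p ++ l).countP (· < a) := by
        simp [List.countP_append, hax.le]
      have hcount : (a :: (p ++ l)).countP (· < x) = (p ++ l).countP (· < x) + 1 := by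
        simp [hax]
      rw [hx, hcount, eraseRank, if_neg (by omega), if_neg (by omega), Nat.add_sub_cancel, ih]
    · have hle := countP_lt_mono (p ++ l) hxa.le
      have hx : (p ++ x :: l).countP (· < a) = (p ++ l).countP (· < a) + 1 := by
        rw [List.countP_append, List.countP_append, List.countP_cons_of_pos (by simpa using hxa),
          add_assoc]
      have hcount : (a :: (p ++ l)).countP (· < x) = (p ++ l).countP (· < x) := by
        simp [hxa.le]
      rw [hx, hcount, eraseRank, if_neg (by omega), if_pos (by omega), Nat.add_sub_cancel, ih]

lemma lehmerCode_mem_of_sublist {S : Language ℕ} (hS : ∀ w ∈ S, ∀ v, eraseRank v w ∈ S)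
    {l l' : List α} (h : l.Sublist l') (p : List α) (hp : (p ++ l').Nodup)
    (hl' : lehmerCode (p ++ l') ∈ S) : lehmerCode (p ++ l) ∈ S := by
  induction h generalizing p with
  | slnil => exact hl'
  | @cons _ l' x _ ih =>
    refine ih p (hp.sublist (List.Sublist.append_left (List.sublist_cons_self _ _) _)) ?_
    rw [lehmerCode_append_eq_eraseRank x l' p hp]
    exact hS _ hl' _
  | cons_cons _ _ ih =>
    rw [List.append_cons] at hp hl' ⊢
    exact ih _ hp hl'

lemma eq_of_perm_of_lehmerCode_eq : ∀ {l l' : List α}, l.Perm l' → lehmerCode l = lehmerCode l' →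
    l = l'
  | [], _, h, _ => (List.nil_perm.1 h).symm
  | _ :: _, [], h, _ => absurd h.length_eq (Nat.succ_ne_zero _)
  | x :: l, y :: _, h, hcode => by
    obtain ⟨hcount, htail⟩ := List.cons.inj hcode
    have hrank : (x :: l).countP (· < x) = (x :: l).countP (· < y) := by
      rw [h.countP_eq (· < y)]
      simpa using hcount
    obtain rfl : x = y := by
      rcases lt_trichotomy x y with hxy | hxy | hyx
      · exact absurd hrank (countP_lt_strictMono List.mem_cons_self hxy).ne
      · exact hxy
      · exact absurd hrank (countP_lt_strictMono (h.mem_iff.2 List.mem_cons_self) hyx).ne'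
    rw [eq_of_perm_of_lehmerCode_eq ((List.perm_cons x).1 h) htail]

lemma countP_lt_getElem {l : List α} (hl : l.SortedLT) {c : ℕ} (hc : c < l.length) :
    (l.eraseIdx c).countP (· < l[c]) = c := by
  have hpair : (l.take c ++ l[c] :: l.drop (c + 1)).Pairwise (· < ·) := by
    rw [← List.drop_eq_getElem_cons hc, List.take_append_drop]
    exact hl.pairwise
  rw [List.pairwise_append, List.pairwise_cons] at hpair
  obtain ⟨-, ⟨hright, -⟩, hleft⟩ := hpair
  have htake : (l.take c).countP (· < l[c]) = c := by
    rw [List.countP_eq_length.2 fun a ha => decide_eq_true (hleft a ha _ List.mem_cons_self),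
      List.length_take_of_le hc.le]
  have hdrop : (l.drop (c + 1)).countP (· < l[c]) = 0 :=
    List.countP_eq_zero.2 fun a ha => by simpa using (hright a ha).le
  rw [List.eraseIdx_eq_take_drop_succ, List.countP_append, htake, hdrop, add_zero]

lemma exists_perm_lehmerCode_eq : ∀ {w : List ℕ}, IsLehmerCode w → ∀ {l : List α}, l.SortedLT →
    l.length = w.length → ∃ l', l'.Perm l ∧ lehmerCode l' = w
  | [], _, l, _, hlen => ⟨l, .refl l, by rw [List.length_eq_zero_iff.1 hlen]; rfl⟩
  | c :: w, ⟨hc, hw⟩, l, hl, hlen => by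
    have hc : c < l.length := by rw [hlen]; exact Nat.lt_succ_of_le hc
    obtain ⟨l', hl', hcode⟩ := exists_perm_lehmerCode_eq hw (l := l.eraseIdx c)
      (hl.pairwise.sublist (List.eraseIdx_sublist _ _)).sortedLT
      (by rw [List.length_eraseIdx_of_lt hc, hlen, List.length_cons, Nat.add_sub_cancel])
    refine ⟨l[c] :: l', (hl'.cons _).trans (List.getElem_cons_eraseIdx_perm hc), ?_⟩
    rw [lehmerCode, hl'.countP_eq, countP_lt_getElem hl hc, hcode]

end LehmerCode

section PermClass

/-- The permutations of length `n` whose Lehmer code belongs to a given language. -/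
def codeClass (S : Language ℕ) (n : ℕ) : Set (Equiv.Perm (Fin n)) :=
  {σ | lehmerCode (List.ofFn σ) ∈ S}

theorem isPermClass_codeClass {S : Language ℕ} (hS : ∀ w ∈ S, ∀ v, eraseRank v w ∈ S) :
    IsPermClass (codeClass S) := by
  rintro n σ hσ k τ ⟨f, hf, hτ⟩
  have hcode : lehmerCode (List.ofFn τ) = lehmerCode (List.ofFn (σ ∘ f)) := by
    rw [List.ofFn_eq_map, List.ofFn_eq_map]
    exact lehmerCode_map_congr hτ _
  have hsub : (List.ofFn (σ ∘ f)).Sublist (List.ofFn σ) := by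
    have hsorted : (List.ofFn f).SortedLT := List.sortedLT_ofFn_iff.2 hf
    rw [List.ofFn_eq_map (f := σ), ← List.map_ofFn]
    exact (List.sublist_of_subperm_of_pairwise (List.subperm_of_subset hsorted.nodup
      fun i _ => List.mem_finRange i) hsorted.pairwise (List.pairwise_lt_finRange n)).map σ
  change lehmerCode (List.ofFn τ) ∈ S
  rw [hcode]
  exact lehmerCode_mem_of_sublist hS hsub [] (List.nodup_ofFn_ofInjective σ.injective) hσ

lemma ofFn_perm_finRange {n : ℕ} (σ : Equiv.Perm (Fin n)) :
    (List.ofFn σ).Perm (List.finRange n) := by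
  simpa [List.ofFn_id] using σ.ofFn_comp_perm id

lemma exists_ofFn_eq_of_perm_finRange {n : ℕ} {l : List (Fin n)} (h : l.Perm (List.finRange n)) :
    ∃ σ : Equiv.Perm (Fin n), List.ofFn σ = l := by
  have hlen : n = l.length := by rw [h.length_eq, List.length_finRange]
  have hnodup : l.Nodup := h.nodup_iff.2 (List.nodup_finRange n)
  refine ⟨(finCongr hlen).trans
    (hnodup.getEquivOfForallMemList l fun i => h.mem_iff.2 (List.mem_finRange i)), ?_⟩
  exact List.ext_getElem (by simp [hlen]) fun i _ _ => by simp

theorem card_codeClass {S : Language ℕ} (hS : ∀ w ∈ S, IsLehmerCode w) (n : ℕ) :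
    Nat.card (codeClass S n) = Nat.card (wordsOfLength S n) := by
  refine Nat.card_congr (Set.BijOn.equiv (fun σ => lehmerCode (List.ofFn σ)) ⟨?_, ?_, ?_⟩)
  · exact fun σ hσ => ⟨hσ, by rw [length_lehmerCode, List.length_ofFn]⟩
  · intro σ _ τ _ h
    have := eq_of_perm_of_lehmerCode_eq ((ofFn_perm_finRange σ).trans (ofFn_perm_finRange τ).symm) h
    exact DFunLike.coe_injective (List.ofFn_injective this)
  · rintro w ⟨hw, rfl⟩
    obtain ⟨l, hl, hcode⟩ := exists_perm_lehmerCode_eq (hS w hw)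
      (List.sortedLT_finRange w.length) (List.length_finRange)
    obtain ⟨σ, rfl⟩ := exists_ofFn_eq_of_perm_finRange hl
    exact ⟨σ, show lehmerCode (List.ofFn σ) ∈ S by rwa [hcode], hcode⟩

end PermClass

/-! ### Block languages closed under erasure -/

section Block

open Computability InformationTheory

/-- The word `1ʳ (20)ʲ 1ˢ 0`, the Lehmer code of an increasing oscillation in which one entry at
either end is inflated to an increasing run, of `r` and of `s` entries. -/
def block (r j s : ℕ) : List ℕ :=
  List.replicate r 1 ++ ((List.replicate j [2, 0]).flatten ++ (List.replicate s 1 ++ [0]))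

/-- The blocks `1ʳ (20)ʲ 1ˢ 0` with `(r, s)` in the shape `P j`. -/
def blocks (P : ℕ → Finset (ℕ × ℕ)) : Language ℕ :=
  {w | ∃ r j s, (r, s) ∈ P j ∧ w = block r j s}

/-- For `0 < j` the shape `P j` lies between the hook `{(r, s) | r ≤ 1 ∨ s ≤ 1}` and the full square
of side `m`. As `block r 0 s = block (r + s) 0 0`, the shape `P 0` only contains pairs
`(r, 0)`. -/
structure IsHookFamily (m : ℕ) (P : ℕ → Finset (ℕ × ℕ)) : Prop where
  pos : 0 < m
  isLowerSet (j : ℕ) : IsLowerSet (P j : Set (ℕ × ℕ))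
  mem_zero {r s : ℕ} : (r, s) ∈ P 0 ↔ r ≤ m + 1 ∧ s = 0
  mem_of_hook {j r s : ℕ} : 0 < j → r ≤ m → s ≤ m → r ≤ 1 ∨ s ≤ 1 → (r, s) ∈ P j
  le {j r s : ℕ} : 0 < j → (r, s) ∈ P j → r ≤ m ∧ s ≤ m

lemma length_block (r j s : ℕ) : (block r j s).length = 2 * j + 1 + (r + s) := by
  have hmid : (List.replicate j [2, 0]).flatten.length = j * 2 := by simp
  simp only [block, List.length_append, List.length_replicate, hmid, List.length_singleton]
  omega

lemma block_zero (r s : ℕ) : block r 0 s = block (r + s) 0 0 := by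
  simp [block, ← List.append_assoc]

lemma block_append (r j s : ℕ) (R : List ℕ) :
    block r j s ++ R = List.replicate r 1 ++ ((List.replicate j [2, 0]).flatten ++
      (List.replicate s 1 ++ 0 :: R)) := by
  simp [block]

lemma eraseRank_zero_replicate_one_append (X : List ℕ) :
    ∀ r, eraseRank 0 (List.replicate r 1 ++ X) = List.replicate r 0 ++ eraseRank 0 X
  | 0 => rfl
  | r + 1 => by
    simp [List.replicate_succ, eraseRank, eraseRank_zero_replicate_one_append X r]

lemma eraseRank_succ_replicate_one_append_of_le (X : List ℕ) (k : ℕ) :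
    ∀ v, eraseRank (v + 1) (List.replicate (v + k + 1) 1 ++ X) = List.replicate (v + k) 1 ++ X
  | 0 => by simp [List.replicate_succ, eraseRank]
  | v + 1 => by
    rw [Nat.add_right_comm v 1 k, List.replicate_succ, List.cons_append, eraseRank,
      if_neg (by omega), if_neg (by omega), Nat.add_sub_cancel,
      eraseRank_succ_replicate_one_append_of_le X k v, List.replicate_succ, List.cons_append]

lemma eraseRank_succ_replicate_one_append_of_lt (X : List ℕ) (v : ℕ) :
    ∀ r, eraseRank (r + v + 1) (List.replicate r 1 ++ X)
      = List.replicate r 1 ++ eraseRank (v + 1) X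
  | 0 => by simp
  | r + 1 => by
    rw [List.replicate_succ, List.cons_append, eraseRank, if_neg (by omega), if_neg (by omega),
      Nat.add_sub_cancel, Nat.add_right_comm r 1 v,
      eraseRank_succ_replicate_one_append_of_lt X v r, List.cons_append]

namespace IsHookFamily

variable {m : ℕ} {P : ℕ → Finset (ℕ × ℕ)}

lemma block_mem (hP : IsHookFamily m P) {r j s : ℕ} (hr : r ≤ m) (hs : s ≤ m)
    (h : r ≤ 1 ∨ s ≤ 1) : block r j s ∈ blocks P := by
  rcases Nat.eq_zero_or_pos j with rfl | hj
  · exact ⟨r + s, 0, 0, hP.mem_zero.2 ⟨by omega, rfl⟩, block_zero r s⟩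
  · exact ⟨r, j, s, hP.mem_of_hook hj hr hs h, rfl⟩

lemma le_right (hP : IsHookFamily m P) {r j s : ℕ} (h : (r, s) ∈ P j) : s ≤ m := by
  rcases Nat.eq_zero_or_pos j with rfl | hj
  · exact (hP.mem_zero.1 h).2 ▸ Nat.zero_le m
  · exact (hP.le hj h).2

lemma replicate_zero_append_mem (hP : IsHookFamily m P) {w : List ℕ} (hw : w ∈ (blocks P)∗) :
    ∀ r, List.replicate r 0 ++ w ∈ (blocks P)∗
  | 0 => hw
  | r + 1 => append_mem_kstar (u := block 0 0 0) (hP.block_mem (by omega) (by omega) (by omega))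
      (hP.replicate_zero_append_mem hw r)

lemma eraseRank_zero_mem (hP : IsHookFamily m P) {s : ℕ} {R : List ℕ} (hs : s ≤ m)
    (hR : R ∈ (blocks P)∗) : ∀ j, eraseRank 0 ((List.replicate j [2, 0]).flatten ++
      (List.replicate s 1 ++ 0 :: R)) ∈ (blocks P)∗
  | 0 => by
    rw [List.replicate_zero, List.flatten_nil, List.nil_append,
      eraseRank_zero_replicate_one_append, eraseRank, if_pos rfl]
    exact hP.replicate_zero_append_mem hR s
  | j + 1 => by
    have hmem := append_mem_kstar (hP.block_mem (j := j) hP.pos hs (Or.inl le_rfl)) hR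
    rw [block_append] at hmem
    simpa [List.replicate_succ (n := j), eraseRank] using hmem

lemma append_eraseRank_succ_mem (hP : IsHookFamily m P) {r s : ℕ} {R : List ℕ}
    (hR : R ∈ (blocks P)∗) (herase : ∀ v, eraseRank v R ∈ (blocks P)∗) :
    ∀ j a v, (r, s) ∈ P (a + j) → List.replicate r 1 ++ ((List.replicate a [2, 0]).flatten ++
      eraseRank (v + 1) ((List.replicate j [2, 0]).flatten ++ (List.replicate s 1 ++ 0 :: R)))
        ∈ (blocks P)∗
  | 0, a, v, h => by
    rw [List.replicate_zero, List.flatten_nil, List.nil_append]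
    rcases Nat.lt_or_ge v s with hv | hv
    · obtain ⟨k, rfl⟩ := Nat.exists_eq_add_of_lt hv
      rw [eraseRank_succ_replicate_one_append_of_le, ← block_append]
      have hle : (r, v + k) ≤ (r, v + k + 1) := Prod.mk_le_mk.2 ⟨le_rfl, Nat.le_succ _⟩
      exact append_mem_kstar ⟨r, a, v + k, hP.isLowerSet a hle h, rfl⟩ hR
    · obtain ⟨k, rfl⟩ := Nat.exists_eq_add_of_le hv
      rw [eraseRank_succ_replicate_one_append_of_lt, eraseRank, if_neg (Nat.succ_ne_zero k),
        if_neg (Nat.not_lt_zero _), Nat.add_sub_cancel, ← block_append]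
      exact append_mem_kstar ⟨r, a, s, h, rfl⟩ (herase k)
  | j + 1, a, 0, h => by
    have hmem := append_mem_kstar
      (hP.block_mem (j := a) (hP.le (Nat.succ_pos _) h).1 hP.pos (Or.inr le_rfl))
      (hP.eraseRank_zero_mem (hP.le_right h) hR j)
    rw [block_append] at hmem
    simpa [List.replicate_succ (n := j), eraseRank] using hmem
  | j + 1, a, 1, h => by
    have hmem := append_mem_kstar
      (hP.block_mem (j := a) (hP.le (Nat.succ_pos _) h).1 (Nat.zero_le m) (Or.inr zero_le_one))
      (append_mem_kstar (hP.block_mem (j := j) (Nat.zero_le m) (hP.le_right h)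
        (Or.inl zero_le_one)) hR)
    rw [block_append, block_append] at hmem
    simpa [List.replicate_succ (n := j), eraseRank] using hmem
  | j + 1, a, v + 2, h => by
    have hmem := hP.append_eraseRank_succ_mem hR herase j (a + 1) v
      (by rwa [Nat.add_right_comm, Nat.add_assoc])
    rw [List.replicate_succ', List.flatten_append, List.flatten_singleton,
      List.append_assoc] at hmem
    simpa [List.replicate_succ (n := j), eraseRank] using hmem

lemma eraseRank_block_append_mem (hP : IsHookFamily m P) {r j s : ℕ} {R : List ℕ}
    (h : (r, s) ∈ P j) (hR : R ∈ (blocks P)∗) (herase : ∀ v, eraseRank v R ∈ (blocks P)∗) (v : ℕ) :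
    eraseRank v (block r j s ++ R) ∈ (blocks P)∗ := by
  rw [block_append]
  rcases v with _ | v
  · rw [eraseRank_zero_replicate_one_append]
    exact hP.replicate_zero_append_mem (hP.eraseRank_zero_mem (hP.le_right h) hR j) r
  rcases Nat.lt_or_ge v r with hv | hv
  · obtain ⟨k, rfl⟩ := Nat.exists_eq_add_of_lt hv
    rw [eraseRank_succ_replicate_one_append_of_le, ← block_append]
    have hle : (v + k, s) ≤ (v + k + 1, s) := Prod.mk_le_mk.2 ⟨Nat.le_succ _, le_rfl⟩
    exact append_mem_kstar ⟨v + k, j, s, hP.isLowerSet j hle h, rfl⟩ hR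
  · obtain ⟨k, rfl⟩ := Nat.exists_eq_add_of_le hv
    rw [eraseRank_succ_replicate_one_append_of_lt]
    exact hP.append_eraseRank_succ_mem hR herase j 0 k (by rwa [Nat.zero_add])

theorem eraseRank_mem (hP : IsHookFamily m P) {w : List ℕ} (hw : w ∈ (blocks P)∗) :
    ∀ v, eraseRank v w ∈ (blocks P)∗ := by
  suffices w ∈ (blocks P)∗ ∧ ∀ v, eraseRank v w ∈ (blocks P)∗ from this.2
  refine kstar_induction (p := fun w => w ∈ (blocks P)∗ ∧ ∀ v, eraseRank v w ∈ (blocks P)∗)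
    ⟨Language.nil_mem_kstar _, fun _ => Language.nil_mem_kstar _⟩ ?_ hw
  rintro _ ⟨r, j, s, h, rfl⟩ R hR ⟨-, herase⟩
  exact ⟨append_mem_kstar ⟨r, j, s, h, rfl⟩ hR, hP.eraseRank_block_append_mem h hR herase⟩

end IsHookFamily

lemma isLehmerCode_replicate_one_append {X : List ℕ} (hX : IsLehmerCode X) (hne : X ≠ []) :
    ∀ r, IsLehmerCode (List.replicate r 1 ++ X)
  | 0 => hX
  | r + 1 => ⟨List.length_pos_of_ne_nil (List.append_ne_nil_of_right_ne_nil _ hne),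
      isLehmerCode_replicate_one_append hX hne r⟩

lemma isLehmerCode_replicate_two_zero_append {X : List ℕ} (hX : IsLehmerCode X) (hne : X ≠ []) :
    ∀ j, IsLehmerCode ((List.replicate j [2, 0]).flatten ++ X)
  | 0 => hX
  | j + 1 => ⟨Nat.succ_le_succ (List.length_pos_of_ne_nil
      (List.append_ne_nil_of_right_ne_nil _ hne)), Nat.zero_le _,
      isLehmerCode_replicate_two_zero_append hX hne j⟩

lemma isLehmerCode_of_mem_kstar_blocks {P : ℕ → Finset (ℕ × ℕ)} {w : List ℕ}
    (hw : w ∈ (blocks P)∗) : IsLehmerCode w := by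
  refine kstar_induction (B := blocks P) (p := IsLehmerCode) trivial ?_ hw
  rintro u ⟨r, j, s, -, rfl⟩ R - hR
  rw [block_append]
  have hright : IsLehmerCode (List.replicate s 1 ++ 0 :: R) :=
    isLehmerCode_replicate_one_append (X := 0 :: R) ⟨Nat.zero_le _, hR⟩ (List.cons_ne_nil _ _) s
  exact isLehmerCode_replicate_one_append
    (isLehmerCode_replicate_two_zero_append hright (by simp) j) (by simp) r

lemma flatten_replicate_append_inj {α : Type*} {u X X' : List α} (hX : ¬ u <+: X)
    (hX' : ¬ u <+: X') : ∀ {r r' : ℕ},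
      (List.replicate r u).flatten ++ X = (List.replicate r' u).flatten ++ X' → r = r' ∧ X = X'
  | 0, 0, h => ⟨rfl, h⟩
  | 0, r' + 1, h => absurd ⟨(List.replicate r' u).flatten ++ X', by
      simpa [List.replicate_succ] using h.symm⟩ hX
  | r + 1, 0, h => absurd ⟨(List.replicate r u).flatten ++ X, by
      simpa [List.replicate_succ] using h⟩ hX'
  | r + 1, r' + 1, h => by
    rw [List.replicate_succ, List.replicate_succ, List.flatten_cons, List.flatten_cons,
      List.append_assoc, List.append_assoc] at h
    obtain ⟨rfl, rfl⟩ := flatten_replicate_append_inj hX hX' (List.append_cancel_left h)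
    exact ⟨rfl, rfl⟩

lemma block_append_inj {r j s r' j' s' : ℕ} {w w' : List ℕ} (hs : j = 0 → s = 0)
    (hs' : j' = 0 → s' = 0) (h : block r j s ++ w = block r' j' s' ++ w') :
    r = r' ∧ j = j' ∧ s = s' := by
  have not_one_prefix {j s : ℕ} (w : List ℕ) (hs : j = 0 → s = 0) :
      ¬ [1] <+: (List.replicate j [2, 0]).flatten ++ (List.replicate s 1 ++ 0 :: w) := by
    cases j with
    | zero => simp [hs rfl]
    | succ j => simp [List.replicate_succ]
  have not_two_zero_prefix (s : ℕ) (w : List ℕ) :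
      ¬ [2, 0] <+: List.replicate s 1 ++ 0 :: w := by
    cases s <;> simp [List.replicate_succ]
  rw [block_append, block_append, ← List.flatten_replicate_singleton (n := r),
    ← List.flatten_replicate_singleton (n := r')] at h
  obtain ⟨hr, h⟩ := flatten_replicate_append_inj (not_one_prefix w hs) (not_one_prefix w' hs') h
  obtain ⟨hj, h⟩ :=
    flatten_replicate_append_inj (not_two_zero_prefix s w) (not_two_zero_prefix s' w') h
  rw [← List.flatten_replicate_singleton (n := s),
    ← List.flatten_replicate_singleton (n := s')] at h
  have not_one_prefix_zero_cons (w : List ℕ) : ¬ [1] <+: 0 :: w := by simp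
  exact ⟨hr, hj,
    (flatten_replicate_append_inj (not_one_prefix_zero_cons w) (not_one_prefix_zero_cons w') h).1⟩

lemma uniquelyDecodable_blocks {P : ℕ → Finset (ℕ × ℕ)} (hP : ∀ r s, (r, s) ∈ P 0 → s = 0) :
    UniquelyDecodable (blocks P) := by
  refine uniquelyDecodable_of_append_inj ?_ ?_
  · rintro ⟨r, j, s, -, h⟩
    simp [block] at h
  · rintro _ ⟨r, j, s, hrs, rfl⟩ _ ⟨r', j', s', hrs', rfl⟩ w w' h
    obtain ⟨rfl, rfl, rfl⟩ := block_append_inj (fun hj => hP r s (hj ▸ hrs))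
      (fun hj => hP r' s' (hj ▸ hrs')) h
    rfl

/-- The block indexed by a point of one of the shapes. -/
def blockOfMem (P : ℕ → Finset (ℕ × ℕ)) (p : Σ j, P j) : {w // w ∈ blocks P} :=
  ⟨block p.2.1.1 p.1 p.2.1.2, p.2.1.1, p.1, p.2.1.2, p.2.2, rfl⟩

lemma bijective_blockOfMem {P : ℕ → Finset (ℕ × ℕ)} (hP : ∀ r s, (r, s) ∈ P 0 → s = 0) :
    Function.Bijective (blockOfMem P) := by
  constructor
  · rintro ⟨j, ⟨r, s⟩, h⟩ ⟨j', ⟨r', s'⟩, h'⟩ heq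
    obtain ⟨rfl, rfl, rfl⟩ := block_append_inj (w := []) (w' := []) (fun hj => hP r s (hj ▸ h))
      (fun hj => hP r' s' (hj ▸ h')) (congrArg (· ++ []) (congrArg Subtype.val heq))
    rfl
  · rintro ⟨_, r, j, s, h, rfl⟩
    exact ⟨⟨j, (r, s), h⟩, rfl⟩

theorem hasSum_pow_length_blocks {P : ℕ → Finset (ℕ × ℕ)} (hP : ∀ r s, (r, s) ∈ P 0 → s = 0)
    {t x : ℝ} (ht : 0 ≤ t)
    (hsum : HasSum (fun j => t ^ (2 * j + 1) * ∑ p ∈ P j, t ^ (p.1 + p.2)) x) :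
    HasSum (fun w : {w // w ∈ blocks P} => t ^ w.1.length) x := by
  rw [← (Equiv.ofBijective _ (bijective_blockOfMem hP)).hasSum_iff]
  have hfiber (j : ℕ) :
      HasSum (fun p : P j => t ^ (blockOfMem P ⟨j, p⟩).1.length)
        (t ^ (2 * j + 1) * ∑ p ∈ P j, t ^ (p.1 + p.2)) := by
    simp only [blockOfMem, length_block, pow_add t (2 * j + 1)]
    exact ((P j).hasSum fun p => t ^ (p.1 + p.2)).mul_left _
  refine hsum.sigma_of_hasSum hfiber ((summable_sigma_of_nonneg fun p => pow_nonneg ht _).2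
    ⟨fun j => (hfiber j).summable, ?_⟩)
  exact hsum.summable.congr fun j => (hfiber j).tsum_eq.symm

end Block

/-! ### Families of shapes with prescribed corners -/

section Shape

/-- The pairs `(r, s)` in the square of side `4` such that `r ≤ 1` or `s ≤ 1`. -/
def hook : Finset (ℕ × ℕ) := (Finset.range 5 ×ˢ Finset.range 5).filter fun p => p.1 ≤ 1 ∨ p.2 ≤ 1

/-- Seven sets whose union with the hook is a lower set, in increasing order of weight for `t` close
to `1 / θ_B`. -/
def corner : Fin 7 → Finset (ℕ × ℕ) :=
  ![{(2, 2), (2, 3)},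
    {(2, 2), (2, 3), (2, 4)},
    {(2, 2), (2, 3), (3, 2)},
    {(2, 2), (2, 3), (2, 4), (3, 2)},
    {(2, 2), (2, 3), (2, 4), (3, 2), (3, 3)},
    {(2, 2), (2, 3), (2, 4), (3, 2), (3, 3), (4, 2)},
    {2, 3, 4} ×ˢ {2, 3, 4}]

/-- The weights of the corners, divided by the weight `t ^ 4` of `(2, 2)`. -/
def digit (t : ℝ) : Fin 7 → ℝ :=
  ![1 + t, 1 + t + t ^ 2, 1 + 2 * t, 1 + 2 * t + t ^ 2, 1 + 2 * t + 2 * t ^ 2,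
    1 + 2 * t + 3 * t ^ 2, (1 + t + t ^ 2) ^ 2]

/-- The family of shapes consisting of hooks, to which the corners `κ 0, κ 1, …` are added from
index `N + 1` on. -/
def shape (κ : ℕ → Fin 7) (N : ℕ) : ℕ → Finset (ℕ × ℕ)
  | 0 => Finset.range 6 ×ˢ {0}
  | j + 1 => if j < N then hook else hook ∪ corner (κ (j - N))

lemma isHookFamily_shape (κ : ℕ → Fin 7) (N : ℕ) : IsHookFamily 4 (shape κ N) where
  pos := four_pos
  isLowerSet j := by
    suffices ∀ p ∈ shape κ N j, ∀ r ≤ p.1, ∀ s ≤ p.2, (r, s) ∈ shape κ N j from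
      fun p q hqp hp => this p hp q.1 hqp.1 q.2 hqp.2
    have hcorner : ∀ i, ∀ p ∈ hook ∪ corner i, ∀ r ≤ p.1, ∀ s ≤ p.2, (r, s) ∈ hook ∪ corner i := by
      decide
    cases j with
    | zero => rw [shape]; decide
    | succ j =>
      rw [shape]
      split_ifs
      · decide
      · exact hcorner _
  mem_zero := by simp [shape, Nat.lt_succ_iff, eq_comm]
  mem_of_hook := by
    rintro (_ | j) r s hj hr hs h
    · exact absurd hj (lt_irrefl 0)
    · have hmem : (r, s) ∈ hook := by
        simp only [hook, Finset.mem_filter, Finset.mem_product, Finset.mem_range]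
        omega
      rw [shape]
      split_ifs
      · exact hmem
      · exact Finset.mem_union_left _ hmem
  le := by
    have hcorner : ∀ i, ∀ p ∈ hook ∪ corner i, p.1 ≤ 4 ∧ p.2 ≤ 4 := by decide
    rintro (_ | j) r s hj h
    · exact absurd hj (lt_irrefl 0)
    · rw [shape] at h
      split_ifs at h
      · exact hcorner 0 _ (Finset.mem_union_left _ h)
      · exact hcorner _ _ h

lemma sum_hook (t : ℝ) :
    ∑ p ∈ hook, t ^ (p.1 + p.2) = (1 + t) * (1 + t + 2 * t ^ 2 + 2 * t ^ 3 + 2 * t ^ 4) := by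
  simp only [hook, Finset.sum_filter, Finset.sum_product, Finset.sum_range_succ,
    Finset.sum_range_zero]
  norm_num
  ring

lemma sum_corner (t : ℝ) (i : Fin 7) :
    ∑ p ∈ corner i, t ^ (p.1 + p.2) = t ^ 4 * digit t i := by
  fin_cases i <;> simp [corner, digit, Finset.sum_product] <;> ring

lemma sum_shape_succ (κ : ℕ → Fin 7) (N j : ℕ) (t : ℝ) :
    ∑ p ∈ shape κ N (j + 1), t ^ (p.1 + p.2) =
      (1 + t) * (1 + t + 2 * t ^ 2 + 2 * t ^ 3 + 2 * t ^ 4) +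
        if j < N then 0 else t ^ 4 * digit t (κ (j - N)) := by
  have hdisj : ∀ i, Disjoint hook (corner i) := by decide
  rw [shape]
  split_ifs
  · rw [sum_hook, add_zero]
  · rw [Finset.sum_union (hdisj _), sum_hook, sum_corner]

lemma hasSum_corners {κ : ℕ → Fin 7} {t x : ℝ}
    (hκ : HasSum (fun n => (t ^ 2) ^ n * digit t (κ n)) x) (N : ℕ) :
    HasSum (fun j => if j < N then 0 else t ^ (2 * j + 7) * digit t (κ (j - N)))
      (t ^ (2 * N + 7) * x) := by
  rw [← hasSum_nat_add_iff' N, Finset.sum_eq_zero fun j hj => if_pos (Finset.mem_range.1 hj),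
    sub_zero]
  refine (hκ.mul_left (t ^ (2 * N + 7))).congr_fun fun n => ?_
  rw [if_neg (by omega), Nat.add_sub_cancel]
  ring

theorem hasSum_shape {κ : ℕ → Fin 7} {t x : ℝ} (ht0 : 0 ≤ t) (ht1 : t < 1)
    (hκ : HasSum (fun n => (t ^ 2) ^ n * digit t (κ n)) x) (N : ℕ) :
    HasSum (fun j => t ^ (2 * j + 1) * ∑ p ∈ shape κ N j, t ^ (p.1 + p.2))
      (t * (1 + t + t ^ 2 + t ^ 3 + t ^ 4 + t ^ 5) +
        (t ^ 3 * (1 + t + 2 * t ^ 2 + 2 * t ^ 3 + 2 * t ^ 4) / (1 - t) +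
          t ^ (2 * N + 7) * x)) := by
  have hgeom : HasSum (fun j => t ^ 3 * ((1 + t) * (1 + t + 2 * t ^ 2 + 2 * t ^ 3 + 2 * t ^ 4)) *
      (t ^ 2) ^ j) (t ^ 3 * (1 + t + 2 * t ^ 2 + 2 * t ^ 3 + 2 * t ^ 4) / (1 - t)) := by
    have hsub : 1 - t ≠ 0 := by linarith
    have hadd : 1 + t ≠ 0 := by linarith
    have hvalue : t ^ 3 * (1 + t + 2 * t ^ 2 + 2 * t ^ 3 + 2 * t ^ 4) / (1 - t)
        = t ^ 3 * ((1 + t) * (1 + t + 2 * t ^ 2 + 2 * t ^ 3 + 2 * t ^ 4)) * (1 - t ^ 2)⁻¹ := by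
      rw [show 1 - t ^ 2 = (1 - t) * (1 + t) by ring]
      field_simp
    rw [hvalue]
    exact (hasSum_geometric_of_lt_one (sq_nonneg t) (by nlinarith)).mul_left _
  have hzero : t ^ (2 * 0 + 1) * ∑ p ∈ shape κ N 0, t ^ (p.1 + p.2)
      = t * (1 + t + t ^ 2 + t ^ 3 + t ^ 4 + t ^ 5) := by
    simp [shape, Finset.sum_range_succ]
  rw [← hzero]
  refine HasSum.zero_add ((hgeom.add (hasSum_corners hκ N)).congr_fun fun j => ?_)
  rw [sum_shape_succ]
  split_ifs <;> ring

lemma digit_succ_sub_digit_le {t : ℝ} (ht : t ∈ Set.Icc 0.424 0.45) (i : Fin 6) :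
    digit t i.succ - digit t i.castSucc
      ≤ t ^ 2 * ((digit t (Fin.last 6) - digit t 0) / (1 - t ^ 2)) := by
  obtain ⟨ht1, ht2⟩ := ht
  have hsq : t ^ 2 ≤ 0.45 * t := by nlinarith
  have hgap : digit t i.succ - digit t i.castSucc ≤ t - t ^ 2 := by
    fin_cases i <;> simp [digit] <;> nlinarith
  have hwidth : digit t (Fin.last 6) - digit t 0 = t + 3 * t ^ 2 + 2 * t ^ 3 + t ^ 4 := by
    change (1 + t + t ^ 2) ^ 2 - (1 + t) = _
    ring
  have hthreshold : 1 ≤ t + 2 * t ^ 2 + 2 * t ^ 3 + 2 * t ^ 4 + t ^ 5 :=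
    calc (1 : ℝ) ≤ 0.424 + 2 * 0.424 ^ 2 + 2 * 0.424 ^ 3 + 2 * 0.424 ^ 4 + 0.424 ^ 5 := by norm_num
      _ ≤ _ := by gcongr
  refine hgap.trans ?_
  rw [hwidth, mul_div_assoc', le_div_iff₀ (by linarith)]
  linarith [mul_le_mul_of_nonneg_left hthreshold (by linarith : 0 ≤ t)]

lemma exists_hasSum_digit {t x : ℝ} (ht : t ∈ Set.Icc 0.424 0.45) (hx : x ∈ Set.Icc 2 3) :
    ∃ κ : ℕ → Fin 7, HasSum (fun n => (t ^ 2) ^ n * digit t (κ n)) x := by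
  have hq : 0 < 1 - t ^ 2 := by nlinarith [ht.1, ht.2]
  refine exists_hasSum_pow_mul_digit (by nlinarith [ht.1]) (by linarith)
    (digit_succ_sub_digit_le ht) ⟨?_, ?_⟩
  · refine le_trans ?_ hx.1
    rw [div_le_iff₀ hq]
    change 1 + t ≤ _
    nlinarith [ht.1, ht.2]
  · refine hx.2.trans ?_
    rw [le_div_iff₀ hq]
    change _ ≤ (1 + t + t ^ 2) ^ 2
    nlinarith [ht.1]

end Shape

/-! ### Growth rates to the right of `θ_B` -/

section GrowthRate

/-- The polynomial whose real root is `θ_B`. -/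
def thetaPoly (x : ℝ) : ℝ := x ^ 7 - 2 * x ^ 6 - x ^ 4 - x ^ 3 - 2 * x ^ 2 - 2 * x - 1

lemma continuous_thetaPoly : Continuous thetaPoly := by
  unfold thetaPoly
  fun_prop

lemma mem_Ioo_of_thetaPoly_eq_zero_iff {θ : ℝ} (hθ : ∀ x, thetaPoly x = 0 ↔ x = θ) :
    θ ∈ Set.Ioo 2.3 2.358 := by
  obtain ⟨x, hx, hx0⟩ := intermediate_value_Ioo (by norm_num) continuous_thetaPoly.continuousOn
    (show (0 : ℝ) ∈ Set.Ioo (thetaPoly 2.3) (thetaPoly 2.358) by norm_num [thetaPoly])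
  exact (hθ x).1 hx0 ▸ hx

lemma thetaPoly_pos {θ : ℝ} (hθ : ∀ x, thetaPoly x = 0 ↔ x = θ) {x : ℝ}
    (hx : x ∈ Set.Ioc θ 2.358) : 0 < thetaPoly x := by
  by_contra! hneg
  have hpos : 0 ≤ thetaPoly 2.358 := by norm_num [thetaPoly]
  obtain ⟨y, hy, hy0⟩ :=
    intermediate_value_Icc hx.2 continuous_thetaPoly.continuousOn ⟨hneg, hpos⟩
  exact (hx.1.trans_le hy.1).ne' ((hθ y).1 hy0)

lemma exists_Icc_mul_pow_mem_Icc {f q : ℝ → ℝ} {a b c d : ℝ} (hab : a < b)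
    (hf : ContinuousOn f (Set.Icc a b)) (hq : ContinuousOn q (Set.Icc a b)) (hfa : f a = 0)
    (hfb : 0 < f b) (hqb : 1 < q b) (hc : 0 < c) (hcd : c < d) :
    ∃ (N : ℕ) (u v : ℝ), a < u ∧ u < v ∧ v < b ∧
      ∀ x ∈ Set.Icc u v, f x * q x ^ N ∈ Set.Icc c d := by
  obtain ⟨N, hN⟩ := pow_unbounded_of_one_lt (d / f b) hqb
  rw [div_lt_iff₀' hfb] at hN
  have hg : ContinuousOn (fun x => f x * q x ^ N) (Set.Icc a b) := hf.mul (hq.pow N)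
  obtain ⟨z, hz, hgz⟩ := intermediate_value_Ioo hab.le hg
    (show (c + d) / 2 ∈ Set.Ioo (f a * q a ^ N) (f b * q b ^ N) by
      rw [hfa, zero_mul]
      constructor <;> linarith)
  have hIoo : f z * q z ^ N ∈ Set.Ioo c d := by
    rw [show f z * q z ^ N = (c + d) / 2 from hgz]
    constructor <;> linarith
  have hnear : ∀ᶠ x in nhds z, x ∈ Set.Ioo a b ∧ f x * q x ^ N ∈ Set.Icc c d :=
    (eventually_mem_set.2 (Ioo_mem_nhds hz.1 hz.2)).and
      ((hg.continuousAt (Icc_mem_nhds hz.1 hz.2)).eventually (Icc_mem_nhds hIoo.1 hIoo.2))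
  obtain ⟨e, he, hball⟩ := (nhds_basis_Icc_pos z).eventually_iff.1 hnear
  exact ⟨N, z - e, z + e, (hball (Set.left_mem_Icc.2 (by linarith))).1.1, by linarith,
    (hball (Set.right_mem_Icc.2 (by linarith))).1.2, fun x hx => (hball hx).2⟩

lemma hasSum_shape_inv_eq_one {κ : ℕ → Fin 7} {γ : ℝ} {N : ℕ} (hγ : 1 < γ)
    (hκ : HasSum (fun n => (γ⁻¹ ^ 2) ^ n * digit γ⁻¹ (κ n))
      (thetaPoly γ * γ / (γ - 1) * (γ ^ 2) ^ N)) :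
    HasSum (fun j => γ⁻¹ ^ (2 * j + 1) * ∑ p ∈ shape κ N j, γ⁻¹ ^ (p.1 + p.2)) 1 := by
  have hγ0 : γ ≠ 0 := by linarith
  have hγ1 : γ - 1 ≠ 0 := by linarith
  have hcancel : γ⁻¹ ^ (2 * N + 7) * (thetaPoly γ * γ / (γ - 1) * (γ ^ 2) ^ N)
      = γ⁻¹ ^ 7 * (thetaPoly γ * γ / (γ - 1)) := by
    rw [pow_add, inv_pow, pow_mul]
    field_simp
  convert hasSum_shape (by positivity) (inv_lt_one_of_one_lt₀ hγ) hκ N using 1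
  rw [hcancel, show 1 - γ⁻¹ = (γ - 1) * γ⁻¹ by field_simp, thetaPoly]
  field_simp
  ring

open Computability in
theorem exists_isPermClass_tendsto {γ : ℝ} {N : ℕ} (hγ : γ ∈ Set.Icc 2.3 2.358)
    (hN : thetaPoly γ * γ / (γ - 1) * (γ ^ 2) ^ N ∈ Set.Icc 2 3) :
    ∃ C : ∀ n : ℕ, Set (Equiv.Perm (Fin n)), IsPermClass C ∧
      Tendsto (fun n : ℕ => (Nat.card ↥(C n) : ℝ) ^ (1 / (n : ℝ))) atTop (nhds γ) := by
  have hγ1 : 1 < γ := by linarith [hγ.1]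
  have ht : γ⁻¹ ∈ Set.Icc (0.424 : ℝ) 0.45 := by
    obtain ⟨hγl, hγr⟩ := hγ
    constructor
    · rw [le_inv_comm₀ (by norm_num) (by linarith)]
      linarith
    · rw [inv_le_comm₀ (by linarith) (by norm_num)]
      linarith
  obtain ⟨κ, hκ⟩ := exists_hasSum_digit ht hN
  have hP := isHookFamily_shape κ N
  have hP0 (r s) (h : (r, s) ∈ shape κ N 0) : s = 0 := (hP.mem_zero.1 h).2
  refine ⟨codeClass (blocks (shape κ N))∗, isPermClass_codeClass fun _ => hP.eraseRank_mem, ?_⟩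
  simp only [card_codeClass fun _ => isLehmerCode_of_mem_kstar_blocks]
  exact tendsto_card_wordsOfLength_rpow_one_div (uniquelyDecodable_blocks hP0) hγ1
    ⟨block 0 0 0, hP.block_mem (Nat.zero_le 4) (Nat.zero_le 4) (Or.inl zero_le_one), rfl⟩
    (hasSum_pow_length_blocks hP0 (by positivity) (hasSum_shape_inv_eq_one hγ1 hκ))

end GrowthRate

/-- Let `θ_B ≈ 2.35526` be the unique real root of `x⁷ - 2x⁶ - x⁴ - x³ - 2x² - 2x - 1`.
For every `ε > 0` there are `0 < δ₁ < δ₂ < ε` such that every point of the interval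
`[θ_B + δ₁, θ_B + δ₂]` is the growth rate of a permutation class. -/
theorem intervals_of_growth_rates_near_theta (θ : ℝ)
    (hθ : ∀ x : ℝ,
      x ^ 7 - 2 * x ^ 6 - x ^ 4 - x ^ 3 - 2 * x ^ 2 - 2 * x - 1 = 0 ↔ x = θ) :
    ∀ ε : ℝ, 0 < ε → ∃ δ₁ δ₂ : ℝ, 0 < δ₁ ∧ δ₁ < δ₂ ∧ δ₂ < ε ∧
      ∀ γ : ℝ, γ ∈ Set.Icc (θ + δ₁) (θ + δ₂) →
        ∃ C : ∀ n : ℕ, Set (Equiv.Perm (Fin n)), IsPermClass C ∧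
          Tendsto (fun n : ℕ => (Nat.card ↥(C n) : ℝ) ^ (1 / (n : ℝ))) atTop (nhds γ) := by
  intro ε hε
  replace hθ : ∀ x, thetaPoly x = 0 ↔ x = θ := hθ
  obtain ⟨hθ1, hθ2⟩ := mem_Ioo_of_thetaPoly_eq_zero_iff hθ
  obtain ⟨b, hθb, hb⟩ := exists_between (lt_min (lt_add_of_pos_right θ hε) hθ2)
  obtain ⟨hbε, hb2⟩ := lt_min_iff.1 hb
  have hcont : ContinuousOn (fun x => thetaPoly x * x / (x - 1)) (Set.Icc θ b) :=
    (continuous_thetaPoly.mul continuous_id).continuousOn.div (by fun_prop) fun x hx => by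
      linarith [hx.1]
  have hbpos : 0 < thetaPoly b * b / (b - 1) :=
    div_pos (mul_pos (thetaPoly_pos hθ ⟨hθb, hb2.le⟩) (by linarith)) (by linarith)
  have hθ0 : thetaPoly θ * θ / (θ - 1) = 0 := by rw [(hθ θ).2 rfl]; simp
  obtain ⟨N, u, v, hu, huv, hv, hN⟩ := exists_Icc_mul_pow_mem_Icc hθb hcont
    (continuous_pow 2).continuousOn hθ0 hbpos (by nlinarith) two_pos (by norm_num : (2 : ℝ) < 3)
  refine ⟨u - θ, v - θ, by linarith, by linarith, by linarith, fun γ hγ => ?_⟩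
  rw [add_sub_cancel, add_sub_cancel] at hγ
  exact exists_isPermClass_tendsto ⟨by linarith [hγ.1], by linarith [hγ.2]⟩ (hN γ hγ)
end
end
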